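/- In the Coxeter setting below, assume moreover that W is finite and let w_0 be its longest element. Then: (a) for every continuous path π : [0,T] → V with π(0) = 0, the path P_{w_0} π takes values in the closed Weyl chamber C̄ = { v ∈ V : α_s∨(v) ≥ 0 for all s ∈ S }; (b) P_{w_0} ∘ P_{w_0} = P_{w_0}; (c) for every w ∈ W, P_w ∘ P_{w_0} = P_{w_0} ∘ P_w = P_{w_0}. -/

import Mathlib

/-- The Pitman transform associated with a pair `(α, α∨)`:
`P_α π (t) = π t − (inf_{0 ≤ s ≤ t} α∨(π s)) • α`. -/
noncomputable def pitman {V : Type*} [AddCommGroup V] [Module ℝ V]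
    (α : V) (αv : Module.Dual ℝ V) (π : ℝ → V) : ℝ → V :=
  fun t => π t - sInf ((fun s => αv (π s)) '' Set.Icc 0 t) • α

/-- The composite Pitman transform `P_{α_{s₁}} ∘ ⋯ ∘ P_{α_{s_l}}` along a word
`l = [s₁, …, s_l]` in the generators. -/
noncomputable def pitmanWord {V : Type*} [AddCommGroup V] [Module ℝ V] {B : Type*}
    (α : B → V) (αv : B → Module.Dual ℝ V) (l : List B) : (ℝ → V) → (ℝ → V) :=
  l.foldr (fun s f => pitman (α s) (αv s) ∘ f) id


/-! ### Running infimum -/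

/-- running infimum -/
noncomputable def runInf (f : ℝ → ℝ) : ℝ → ℝ := fun t => sInf (f '' Set.Icc 0 t)

theorem runInf_neg (f : ℝ → ℝ) {t : ℝ} (ht : t < 0) : runInf f t = 0 := by
  simp [runInf, Set.Icc_eq_empty (not_le.mpr ht)]

theorem runInf_exists {f : ℝ → ℝ} (hf : ContinuousOn f (Set.Ici 0)) {t : ℝ} (ht : 0 ≤ t) :
    ∃ u, 0 ≤ u ∧ u ≤ t ∧ runInf f t = f u := by
  obtain ⟨u, hu, h⟩ := (isCompact_Icc (a := (0:ℝ)) (b := t)).exists_sInf_image_eq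
    (Set.nonempty_Icc.mpr ht) (hf.mono Set.Icc_subset_Ici_self)
  exact ⟨u, hu.1, hu.2, h⟩

theorem runInf_le {f : ℝ → ℝ} (hf : ContinuousOn f (Set.Ici 0)) {u t : ℝ} (hu : 0 ≤ u)
    (hut : u ≤ t) : runInf f t ≤ f u :=
  csInf_le ((isCompact_Icc.image_of_continuousOn
    (hf.mono Set.Icc_subset_Ici_self)).bddBelow) ⟨u, ⟨hu, hut⟩, rfl⟩

theorem le_runInf {f : ℝ → ℝ} (hf : ContinuousOn f (Set.Ici 0)) {t c : ℝ} (ht : 0 ≤ t)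
    (h : ∀ u, 0 ≤ u → u ≤ t → c ≤ f u) : c ≤ runInf f t := by
  obtain ⟨u, h0, h1, h2⟩ := runInf_exists hf ht
  rw [h2]; exact h u h0 h1

theorem runInf_anti {f : ℝ → ℝ} (hf : ContinuousOn f (Set.Ici 0)) {u t : ℝ} (hu : 0 ≤ u)
    (hut : u ≤ t) : runInf f t ≤ runInf f u :=
  le_runInf hf hu fun _ h0 h1 => runInf_le hf h0 (h1.trans hut)

theorem runInf_const_mul {f : ℝ → ℝ} {c : ℝ} (hc : 0 ≤ c) (t : ℝ) :
    runInf (fun u => c * f u) t = c * runInf f t := by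
  have := Real.sInf_smul_of_nonneg hc (f '' Set.Icc 0 t)
  simp only [runInf]
  rw [← smul_eq_mul, ← this]
  congr 1
  ext x
  simp [Set.mem_smul_set]

theorem runInf_congr {f g : ℝ → ℝ} {t : ℝ} (h : ∀ u, 0 ≤ u → u ≤ t → f u = g u) :
    runInf f t = runInf g t := by
  simp only [runInf]
  congr 1
  exact Set.image_congr fun u hu => h u hu.1 hu.2

theorem runInf_continuousOn {f : ℝ → ℝ} (hf : ContinuousOn f (Set.Ici 0)) :
    ContinuousOn (runInf f) (Set.Ici 0) := by
  have hg : Continuous (fun x : ℝ => f (max 0 x)) :=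
    hf.comp_continuous (by fun_prop) (fun x => Set.mem_Ici.mpr (le_max_left _ _))
  have h2 : Continuous (fun t : ℝ => sInf ((fun r => f (max 0 (t * r))) '' Set.Icc (0:ℝ) 1)) := by
    apply IsCompact.continuous_sInf isCompact_Icc
    exact hg.comp (by fun_prop : Continuous fun p : ℝ × ℝ => p.1 * p.2)
  refine h2.continuousOn.congr ?_
  intro t ht
  have ht' : (0:ℝ) ≤ t := ht
  simp only [runInf]
  congr 1
  ext y
  constructor
  · rintro ⟨u, ⟨h0, h1⟩, rfl⟩
    rcases ht'.eq_or_lt with h | h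
    · subst h
      exact ⟨0, by simp, by simp [le_antisymm h1 h0]⟩
    · refine ⟨u / t, ⟨by positivity, by rw [div_le_one h]; exact h1⟩, ?_⟩
      have : t * (u / t) = u := by field_simp
      simp [this, h0]
  · rintro ⟨r, ⟨h0, h1⟩, rfl⟩
    refine ⟨t * r, ⟨by positivity, by nlinarith⟩, ?_⟩
    have : 0 ≤ t * r := by positivity
    simp [this]

/-- first time that `γ` goes down to its past minimum. -/
theorem exists_hit {γ : ℝ → ℝ} (hγ : ContinuousOn γ (Set.Ici 0)) {u t : ℝ} (hu : 0 ≤ u)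
    (hut : u ≤ t) (hlt : runInf γ t < runInf γ u) :
    ∃ v, u ≤ v ∧ v ≤ t ∧ γ v = runInf γ u ∧ runInf γ v = runInf γ u := by
  obtain ⟨w, hw0, hwt, hw⟩ := runInf_exists hγ (hu.trans hut)
  have huw : u ≤ w := by
    by_contra! h
    have := runInf_le hγ hw0 h.le
    linarith
  have hcont : ContinuousOn γ (Set.Icc u w) := hγ.mono fun x hx => hu.trans hx.1
  have hcl : IsCompact (Set.Icc u w ∩ γ ⁻¹' Set.Iic (runInf γ u)) :=
    isCompact_Icc.of_isClosed_subset
      (hcont.preimage_isClosed_of_isClosed isClosed_Icc isClosed_Iic) Set.inter_subset_left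
  obtain ⟨v, ⟨⟨hv1, hv2⟩, hv3⟩, hvl⟩ := hcl.exists_isLeast ⟨w, ⟨huw, le_rfl⟩, by
    simp only [Set.mem_preimage, Set.mem_Iic]; linarith⟩
  have hv3' : γ v ≤ runInf γ u := hv3
  have hmin : ∀ x, 0 ≤ x → x < v → runInf γ u ≤ γ x := by
    intro x hx hxv
    by_cases hxu : x ≤ u
    · exact runInf_le hγ hx hxu
    · by_contra! hc
      have := hvl ⟨⟨(not_le.mp hxu).le, hxv.le.trans hv2⟩, hc.le⟩
      linarith
  have hγv : γ v = runInf γ u := by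
    by_contra hne
    have hlt' : γ v < runInf γ u := lt_of_le_of_ne hv3' hne
    obtain ⟨x, hx, hxe⟩ := intermediate_value_Icc' hv1
      (hcont.mono (Set.Icc_subset_Icc_right hv2)) (show runInf γ u ∈ Set.Icc (γ v) (γ u) from
        ⟨hv3', runInf_le hγ hu le_rfl⟩)
    have := hvl ⟨⟨hx.1, hx.2.trans hv2⟩, hxe.le⟩
    have : x = v := le_antisymm hx.2 this
    subst this
    linarith
  refine ⟨v, hv1, hv2.trans hwt, hγv, ?_⟩
  apply le_antisymm
  · exact runInf_anti hγ hu hv1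
  · refine le_runInf hγ (hu.trans hv1) fun x h0 h1 => ?_
    rcases h1.eq_or_lt with h | h
    · rw [h, hγv]
    · exact hmin x h0 h

theorem runInf_key {γ F : ℝ → ℝ} (hγ : ContinuousOn γ (Set.Ici 0))
    (hF : ContinuousOn F (Set.Ici 0)) {c : ℝ} (hc : 0 ≤ c) (t : ℝ) :
    runInf (fun v => c * (γ v - 2 * runInf γ v) + runInf (fun u => F u + c * runInf γ u) v) t
      = runInf (fun v => c * γ v + runInf F v) t - c * runInf γ t := by
  by_cases ht : t < 0
  · simp [runInf_neg _ ht]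
  push Not at ht
  have hΓ := runInf_continuousOn hγ
  have hF1 : ContinuousOn (fun u => F u + c * runInf γ u) (Set.Ici 0) := by fun_prop
  have hF2 := runInf_continuousOn hF1
  have hF3 := runInf_continuousOn hF
  have h1 : ContinuousOn (fun v => c * (γ v - 2 * runInf γ v) +
      runInf (fun u => F u + c * runInf γ u) v) (Set.Ici 0) := by fun_prop
  have h2 : ContinuousOn (fun v => c * γ v + runInf F v) (Set.Ici 0) := by fun_prop
  apply le_antisymm
  · obtain ⟨v, hv0, hvt, hv⟩ := runInf_exists h2 ht
    obtain ⟨u, hu0, huv, hu⟩ := runInf_exists hF hv0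
    rw [hv]
    simp only [hu]
    obtain ⟨v', h3, h4, h5⟩ : ∃ v', u ≤ v' ∧ v' ≤ t ∧
        γ v' - 2 * runInf γ v' + runInf γ u ≤ γ v - runInf γ t := by
      rcases (runInf_anti hγ hu0 (huv.trans hvt)).eq_or_lt with h | h
      · refine ⟨v, huv, hvt, ?_⟩
        have := runInf_anti hγ hu0 huv
        have := runInf_anti hγ hv0 hvt
        linarith
      · obtain ⟨v', h3, h4, h5, h6⟩ := exists_hit hγ hu0 (huv.trans hvt) h
        refine ⟨v', h3, h4, ?_⟩
        have := runInf_le hγ hv0 hvt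
        linarith
    have h6 := runInf_le h1 (hu0.trans h3) h4
    have h7 := runInf_le hF1 hu0 h3
    nlinarith [mul_le_mul_of_nonneg_left h5 hc]
  · obtain ⟨v, hv0, hvt, hv⟩ := runInf_exists h1 ht
    obtain ⟨u, hu0, huv, hu⟩ := runInf_exists hF1 hv0
    rw [hv]
    simp only [hu]
    obtain ⟨w, h3, h4, h5⟩ : ∃ w, u ≤ w ∧ w ≤ t ∧
        γ w - runInf γ t ≤ γ v - 2 * runInf γ v + runInf γ u := by
      obtain ⟨w, hw0, hwt, hw⟩ := runInf_exists hγ ht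
      have e1 := runInf_anti hγ hu0 huv
      have e2 := runInf_anti hγ hv0 hvt
      rcases le_total u w with h | h
      · refine ⟨w, h, hwt, ?_⟩
        have := runInf_le hγ hv0 le_rfl
        linarith
      · refine ⟨v, huv, hvt, ?_⟩
        have := runInf_le hγ hw0 h
        linarith
    have h6 := runInf_le h2 (hu0.trans h3) h4
    have h7 := runInf_le hF hu0 h3
    nlinarith [mul_le_mul_of_nonneg_left h5 hc]

/-! ### Chains -/

/-- nested running infima -/
noncomputable def chain (τ : ℕ → ℝ) : ℕ → ℕ → (ℝ → ℝ) → (ℝ → ℝ) → (ℝ → ℝ)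
  | 0, _, _, _ => fun _ => 0
  | j + 1, k, z, z' => runInf (fun u => τ k * z u + chain τ j (k + 1) z' z u)

theorem chain_succ (τ : ℕ → ℝ) (j k : ℕ) (z z' : ℝ → ℝ) : chain τ (j + 1) k z z' =
    runInf (fun u => τ k * z u + chain τ j (k + 1) z' z u) := rfl

theorem chain_continuousOn (τ : ℕ → ℝ) (j k : ℕ) {z z' : ℝ → ℝ}
    (hz : ContinuousOn z (Set.Ici 0)) (hz' : ContinuousOn z' (Set.Ici 0)) :
    ContinuousOn (chain τ j k z z') (Set.Ici 0) := by
  induction j generalizing k z z' with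
  | zero => exact continuousOn_const
  | succ j ih =>
    apply runInf_continuousOn
    have := ih (k + 1) hz' hz
    fun_prop

theorem runInf_zero : runInf (fun _ => 0) = fun _ => 0 := by
  funext t
  have := runInf_const_mul (f := fun _ => 0) (c := 0) le_rfl t
  simpa using this

theorem chain_top (τ : ℕ → ℝ) (j k : ℕ) (z z' : ℝ → ℝ) (h : τ (k + j) = 0) :
    chain τ (j + 1) k z z' = chain τ j k z z' := by
  induction j generalizing k z z' with
  | zero =>
    have h' : τ k = 0 := h
    simp only [chain, h', zero_mul, add_zero]
    exact runInf_zero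
  | succ j ih =>
    rw [chain, ih (k + 1) z' z (by rw [← h]; congr 1; ring)]
    rfl

theorem chain_even {τ : ℕ → ℝ} {r : ℝ} (hτ : ∀ k, τ (k + 2) = 2 * r * τ (k + 1) - τ k)
    {γ z : ℝ → ℝ} (hγ : ContinuousOn γ (Set.Ici 0)) (hz : ContinuousOn z (Set.Ici 0))
    (i k : ℕ) (hpos : ∀ a, a ≤ k + 2 * i → 0 ≤ τ a) :
    chain τ (2 * i) k (fun u => γ u - 2 * runInf γ u) (fun u => z u + 2 * r * runInf γ u)
      = fun t => chain τ (2 * i + 1) k γ z t - τ k * runInf γ t := by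
  induction i generalizing k with
  | zero =>
    funext t
    simp only [chain, add_zero]
    rw [runInf_const_mul (hpos k (by omega))]
    simp
  | succ i ih =>
    funext t
    rw [show 2 * (i + 1) = 2 * i + 1 + 1 by ring, chain_succ τ (2 * i + 1) k,
      chain_succ τ (2 * i) (k + 1), ih (k + 2) (fun a ha => hpos a (by omega)),
      chain_succ τ (2 * i + 1 + 1) k, chain_succ τ (2 * i + 1) (k + 1)]
    have hF : ContinuousOn (fun u => τ (k + 1) * z u + chain τ (2 * i + 1) (k + 2) γ z u)
        (Set.Ici 0) := by
      have := chain_continuousOn τ (2 * i + 1) (k + 2) hγ hz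
      fun_prop
    rw [← runInf_key hγ hF (hpos k (by omega)) t]
    congr 1
    funext v
    congr 2
    funext u
    dsimp only
    rw [hτ k]
    ring

theorem chain_odd {τ : ℕ → ℝ} {r : ℝ} (hτ : ∀ k, τ (k + 2) = 2 * r * τ (k + 1) - τ k)
    (hτ0 : τ 0 = 0)
    {γ z : ℝ → ℝ} (hγ : ContinuousOn γ (Set.Ici 0)) (hz : ContinuousOn z (Set.Ici 0))
    (i : ℕ) (hpos : ∀ a, a ≤ 2 + 2 * i → 0 ≤ τ a) :
    chain τ (2 * i + 1) 1 (fun u => z u + 2 * r * runInf γ u) (fun u => γ u - 2 * runInf γ u)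
      = chain τ (2 * i + 2) 1 z γ := by
  rw [chain_succ τ (2 * i) 1, chain_even hτ hγ hz i 2 hpos, chain_succ τ (2 * i + 1) 1]
  congr 1
  funext u
  dsimp only
  rw [hτ 0, hτ0]
  ring


/-! ### Alternating products and the sine sequence -/

/-- The alternating product `a * b * a * ⋯` with `k` factors. -/
def altP {G : Type*} [Monoid G] : G → G → ℕ → G
  | _, _, 0 => 1
  | a, b, k + 1 => a * altP b a k

theorem altP_succ {G : Type*} [Monoid G] (a b : G) (k : ℕ) :
    altP a b (k + 1) = a * altP b a k := rfl

theorem altP_concat_even {G : Type*} [Monoid G] (a b : G) (i : ℕ) :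
    altP a b (2 * i + 1) = altP a b (2 * i) * a := by
  induction i with
  | zero => simp [altP]
  | succ i ih =>
    rw [show 2 * (i + 1) = 2 * i + 1 + 1 by ring]
    rw [altP_succ a b (2 * i + 1 + 1), altP_succ b a, ih, altP_succ a b, altP_succ b a]
    simp only [mul_assoc]

theorem altP_concat_odd {G : Type*} [Monoid G] (a b : G) (i : ℕ) :
    altP a b (2 * i + 2) = altP a b (2 * i + 1) * b := by
  rw [altP_succ a b, altP_concat_even b a, altP_succ a b, mul_assoc]

theorem altP_map {G H : Type*} [Monoid G] [Monoid H] (φ : G →* H) (a b : G) (k : ℕ) :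
    φ (altP a b k) = altP (φ a) (φ b) k := by
  induction k generalizing a b with
  | zero => simp [altP]
  | succ k ih => simp [altP, ih]

theorem altP_mul_inv {G : Type*} [Group G] (a b : G) (ha : a * a = 1) (hb : b * b = 1) (k : ℕ) :
    altP a b k * (altP b a k)⁻¹ = (a * b) ^ k := by
  induction k generalizing a b with
  | zero => simp [altP]
  | succ k ih =>
    have h := ih b a hb ha
    have hb' : b⁻¹ = b := inv_eq_of_mul_eq_one_left hb
    rw [altP_succ, altP_succ, mul_inv_rev, hb',
      show a * altP b a k * ((altP a b k)⁻¹ * b) = a * (altP b a k * (altP a b k)⁻¹) * b by group,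
      h]
    have e : ∀ k : ℕ, a * (b * a) ^ k * b = (a * b) ^ (k + 1) := by
      intro k
      induction k with
      | zero => simp
      | succ k ih => rw [pow_succ, pow_succ (a * b), ← ih]; simp only [mul_assoc]
    exact e k

/-- The sequence `sin (k θ) / sin θ` with `r = cos θ`. -/
def sinSeq (r : ℝ) : ℕ → ℝ
  | 0 => 0
  | 1 => 1
  | k + 2 => 2 * r * sinSeq r (k + 1) - sinSeq r k

theorem sinSeq_mul_sin (θ : ℝ) (k : ℕ) :
    sinSeq (Real.cos θ) k * Real.sin θ = Real.sin (k * θ) ∧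
    sinSeq (Real.cos θ) (k + 1) * Real.sin θ = Real.sin ((k + 1 : ℕ) * θ) := by
  induction k with
  | zero => simp [sinSeq]
  | succ k ih =>
    refine ⟨ih.2, ?_⟩
    rw [sinSeq, sub_mul, mul_assoc, ih.2, ih.1]
    have e1 : ((k + 1 + 1 : ℕ) : ℝ) * θ = (k + 1 : ℕ) * θ + θ := by push_cast; ring
    have e2 : (k : ℝ) * θ = (k + 1 : ℕ) * θ - θ := by push_cast; ring
    rw [e1, e2, Real.sin_add, Real.sin_sub]
    ring

theorem sinSeq_one (k : ℕ) : sinSeq 1 k = k ∧ sinSeq 1 (k + 1) = (k + 1 : ℕ) := by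
  induction k with
  | zero => simp [sinSeq]
  | succ k ih =>
    refine ⟨ih.2, ?_⟩
    rw [sinSeq, ih.2, ih.1]
    push_cast; ring

theorem sinSeq_pos {m : ℕ} (hm : m ≠ 1) {k : ℕ} (hk : 0 < k) (hkm : k < m ∨ m = 0) :
    0 < sinSeq (Real.cos (Real.pi / m)) k := by
  rcases Nat.eq_zero_or_pos m with rfl | hm0
  · simp [(sinSeq_one k).1, hk]
  · have hkm' : k < m := by omega
    have h2 : (2 : ℝ) ≤ m := by exact_mod_cast (by omega : 2 ≤ m)
    have hpi := Real.pi_pos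
    have h := (sinSeq_mul_sin (Real.pi / m) k).1
    have hs : 0 < Real.sin (Real.pi / m) :=
      Real.sin_pos_of_pos_of_lt_pi (by positivity) (div_lt_self hpi (by linarith))
    have hs2 : 0 < Real.sin (k * (Real.pi / m)) := by
      apply Real.sin_pos_of_pos_of_lt_pi
      · positivity
      · rw [← mul_div_assoc, div_lt_iff₀ (by linarith)]
        have : (k : ℝ) < m := by exact_mod_cast hkm'
        nlinarith
    rw [← h] at hs2
    exact pos_of_mul_pos_left hs2 hs.le

theorem sinSeq_self {m : ℕ} (hm : m ≠ 1) :
    sinSeq (Real.cos (Real.pi / m)) m = 0 := by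
  rcases Nat.eq_zero_or_pos m with rfl | hm0
  · rfl
  · have h2 : (2 : ℝ) ≤ m := by exact_mod_cast (by omega : 2 ≤ m)
    have hpi := Real.pi_pos
    have h := (sinSeq_mul_sin (Real.pi / m) m).1
    have hs : 0 < Real.sin (Real.pi / m) :=
      Real.sin_pos_of_pos_of_lt_pi (by positivity) (div_lt_self hpi (by linarith))
    rw [mul_div_cancel₀ _ (by linarith), Real.sin_pi] at h
    exact (mul_eq_zero.mp h).resolve_right hs.ne'

theorem sinSeq_nonneg {m : ℕ} (hm : m ≠ 1) {k : ℕ} (hkm : k ≤ m) :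
    0 ≤ sinSeq (Real.cos (Real.pi / m)) k := by
  rcases Nat.eq_zero_or_pos k with rfl | hk
  · exact le_rfl
  rcases hkm.eq_or_lt with rfl | h
  · rw [sinSeq_self hm]
  · exact (sinSeq_pos hm hk (Or.inl h)).le

/-! ### Pitman transforms: the braid relation -/

section Braid
set_option linter.unusedSectionVars false
variable {V : Type*} [NormedAddCommGroup V] [NormedSpace ℝ V] [FiniteDimensional ℝ V]

/-- good paths -/
def Good (π : ℝ → V) : Prop := ContinuousOn π (Set.Ici 0) ∧ π 0 = 0

theorem Good.comp {π : ℝ → V} (h : Good π) (f : Module.Dual ℝ V) :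
    ContinuousOn (fun t => f (π t)) (Set.Ici 0) :=
  (LinearMap.continuous_of_finiteDimensional f).comp_continuousOn h.1

theorem pitman_apply (α : V) (f : Module.Dual ℝ V) (π : ℝ → V) (t : ℝ) :
    pitman α f π t = π t - runInf (fun u => f (π u)) t • α := rfl

theorem Good.pitman {π : ℝ → V} (h : Good π) (α : V) (f : Module.Dual ℝ V) :
    Good (pitman α f π) := by
  constructor
  · have h1 := runInf_continuousOn (h.comp f)
    have h2 := h.1
    change ContinuousOn (fun t => π t - runInf (fun u => f (π u)) t • α) _
    fun_prop
  · rw [pitman_apply, runInf]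
    simp [h.2]

theorem pitman_smul (α : V) (f : Module.Dual ℝ V) {c : ℝ} (hc : 0 < c) :
    pitman (c • α) (c⁻¹ • f) = pitman α f := by
  funext π t
  rw [pitman_apply, pitman_apply]
  have := runInf_const_mul (f := fun u => f (π u)) (c := c⁻¹) (by positivity) t
  simp only [LinearMap.smul_apply, smul_eq_mul]
  rw [this, smul_smul]
  congr 2
  field_simp

/-- The Pitman transform as an element of the monoid of self-maps of the path space. -/
noncomputable def pitmanEnd (α : V) (f : Module.Dual ℝ V) : Function.End (ℝ → V) := pitman α f

theorem pitman_alt {α β : V} {f g : Module.Dual ℝ V} {r : ℝ}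
    (hα : f α = 2) (hβ : g β = 2) (hαβ : f β = -(2 * r)) (hβα : g α = -(2 * r))
    (n : ℕ) (hpos : ∀ a, a ≤ n + 1 → 0 ≤ sinSeq r a) {π : ℝ → V} (hπ : Good π) (t : ℝ) :
    (altP (pitmanEnd α f) (pitmanEnd β g) (n + 1)) π t =
      π t - chain (sinSeq r) (n + 1) 1 (fun u => f (π u)) (fun u => g (π u)) t • α
        - chain (sinSeq r) n 1 (fun u => g (π u)) (fun u => f (π u)) t • β := by
  induction n generalizing π with
  | zero =>
    simp [altP, chain, sinSeq]
    rfl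
  | succ n ih =>
    have ih' := fun {π : ℝ → V} => ih (fun a ha => hpos a (by omega)) (π := π)
    have hτ : ∀ k, sinSeq r (k + 2) = 2 * r * sinSeq r (k + 1) - sinSeq r k := fun k => rfl
    have hf := hπ.comp f
    have hg := hπ.comp g
    rcases Nat.even_or_odd' n with ⟨i, rfl | rfl⟩
    · rw [show 2 * i + 1 + 1 = 2 * i + 2 from rfl, altP_concat_odd]
      change (altP (pitmanEnd α f) (pitmanEnd β g) (2 * i + 1))
        (pitman β g π) t = _
      rw [ih' (hπ.pitman β g)]
      have e1 : (fun u => f (pitman β g π u)) =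
          fun u => f (π u) + 2 * r * runInf (fun u => g (π u)) u := by
        funext u; rw [pitman_apply]; simp [hαβ]; ring
      have e2 : (fun u => g (pitman β g π u)) =
          fun u => g (π u) - 2 * runInf (fun u => g (π u)) u := by
        funext u; rw [pitman_apply]; simp [hβ]; ring
      rw [e1, e2, chain_odd hτ rfl hg hf i (fun a ha => hpos a (by omega)),
        chain_even hτ hg hf i 1 (fun a ha => hpos a (by omega)), pitman_apply]
      simp only [sinSeq]
      module
    · rw [show 2 * i + 1 + 1 + 1 = 2 * (i + 1) + 1 by ring, altP_concat_even]
      change (altP (pitmanEnd α f) (pitmanEnd β g) (2 * i + 1 + 1))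
        (pitman α f π) t = _
      rw [ih' (hπ.pitman α f)]
      have e1 : (fun u => g (pitman α f π u)) =
          fun u => g (π u) + 2 * r * runInf (fun u => f (π u)) u := by
        funext u; rw [pitman_apply]; simp [hβα]; ring
      have e2 : (fun u => f (pitman α f π u)) =
          fun u => f (π u) - 2 * runInf (fun u => f (π u)) u := by
        funext u; rw [pitman_apply]; simp [hα]; ring
      rw [e1, e2, chain_odd hτ rfl hf hg i (fun a ha => hpos a (by omega)),
        show 2 * i + 1 + 1 = 2 * (i + 1) by ring,
        chain_even hτ hf hg (i + 1) 1 (fun a ha => hpos a (by omega)), pitman_apply]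
      simp only [sinSeq]
      module

theorem pitman_braid {α β : V} {f g : Module.Dual ℝ V} {m : ℕ} (hm : 2 ≤ m)
    (hα : f α = 2) (hβ : g β = 2)
    (h : (m = 2 ∧ f β = 0 ∧ g α = 0) ∨
      (f β < 0 ∧ g α < 0 ∧ f β * g α = 4 * Real.cos (Real.pi / m) ^ 2))
    {π : ℝ → V} (hπ : Good π) :
    (altP (pitmanEnd α f) (pitmanEnd β g) m) π =
    (altP (pitmanEnd β g) (pitmanEnd α f) m) π := by
  set r := Real.cos (Real.pi / m) with hr
  have h2 : (2 : ℝ) ≤ m := by exact_mod_cast hm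
  have hr0 : 0 ≤ r := by
    apply Real.cos_nonneg_of_neg_pi_div_two_le_of_le
    · have : 0 ≤ Real.pi / m := by positivity
      linarith [Real.pi_pos]
    · exact div_le_div_of_nonneg_left Real.pi_pos.le (by norm_num) h2
  obtain ⟨c, hc, hc1, hc2⟩ : ∃ c : ℝ, 0 < c ∧ f (c • β) = -(2 * r) ∧ (c⁻¹ • g) α = -(2 * r) := by
    rcases h with ⟨rfl, h1, h3⟩ | ⟨h1, h3, h4⟩
    · refine ⟨1, one_pos, ?_, ?_⟩ <;> simp [hr, h1, h3]
    · have hq : 0 < g α / f β := div_pos_of_neg_of_neg h3 h1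
      have key : √(g α / f β) * f β = -(2 * r) := by
        have e : (√(g α / f β) * f β) ^ 2 = (-(2 * r)) ^ 2 := by
          rw [mul_pow, Real.sq_sqrt hq.le]
          have : f β ≠ 0 := h1.ne
          field_simp
          linarith
        rcases sq_eq_sq_iff_eq_or_eq_neg.mp e with e | e
        · exact e
        · have : √(g α / f β) * f β < 0 := mul_neg_of_pos_of_neg (Real.sqrt_pos.mpr hq) h1
          linarith
      refine ⟨√(g α / f β), Real.sqrt_pos.mpr hq, ?_, ?_⟩
      · simpa using key
      · rw [← key]
        simp only [LinearMap.smul_apply, smul_eq_mul]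
        have hs := Real.sqrt_pos.mpr hq
        have : √(g α / f β) * √(g α / f β) = g α / f β := Real.mul_self_sqrt hq.le
        rw [inv_mul_eq_iff_eq_mul₀ hs.ne', ← mul_assoc, this]
        field_simp [h1.ne]
  rw [show pitmanEnd β g = pitmanEnd (c • β) (c⁻¹ • g) from (pitman_smul β g hc).symm]
  have hβ' : (c⁻¹ • g) (c • β) = 2 := by simp [hβ]; field_simp
  obtain ⟨n, rfl⟩ : ∃ n, m = n + 1 := ⟨m - 1, by omega⟩
  have hn : n + 1 ≠ 1 := by omega
  have hpos : ∀ a, a ≤ n + 1 → 0 ≤ sinSeq r a := fun a ha => sinSeq_nonneg hn ha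
  have hz : sinSeq r (1 + n) = 0 := by rw [add_comm]; exact sinSeq_self hn
  funext t
  rw [pitman_alt hα hβ' hc1 hc2 n hpos hπ t, pitman_alt hβ' hα hc2 hc1 n hpos hπ t,
    chain_top _ _ _ _ _ hz, chain_top _ _ _ _ _ hz]
  abel

end Braid

/-! ### The geometric representation and the order of products of simple reflections -/

/-- linear analogue of `chain` -/
def linChain (τ : ℕ → ℝ) : ℕ → ℕ → ℝ → ℝ → ℝ
  | 0, _, _, _ => 0
  | j + 1, k, z, z' => τ k * z + linChain τ j (k + 1) z' z

theorem linChain_rec {r : ℝ} (j k : ℕ) (z z' : ℝ) :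
    linChain (sinSeq r) j (k + 2) z z' =
      2 * r * linChain (sinSeq r) j (k + 1) z z' - linChain (sinSeq r) j k z z' := by
  induction j generalizing k z z' with
  | zero => simp [linChain]
  | succ j ih =>
    simp only [linChain]
    rw [ih (k + 1) z' z, show sinSeq r (k + 2) = 2 * r * sinSeq r (k + 1) - sinSeq r k from rfl]
    ring

theorem linChain_two {r : ℝ} (n : ℕ) (z z' : ℝ) :
    linChain (sinSeq r) (n + 2) 1 z z' =
      z + 2 * r * linChain (sinSeq r) (n + 1) 1 z' z - linChain (sinSeq r) n 1 z z' := by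
  rw [linChain, linChain_rec (n + 1) 0 z' z]
  simp only [linChain, sinSeq]
  ring

theorem linChain_succ_sub (τ : ℕ → ℝ) (j k : ℕ) (z z' : ℝ) :
    linChain τ (j + 1) k z z' = linChain τ j k z z' + τ (k + j) * (if Even j then z else z') := by
  induction j generalizing k z z' with
  | zero => simp [linChain]
  | succ j ih =>
    rw [linChain, ih (k + 1) z' z]
    simp only [linChain]
    rw [show k + 1 + j = k + (j + 1) by ring]
    by_cases h : Even j <;> simp [h, Nat.even_add_one, add_assoc]

section Lin
variable {E : Type*} [AddCommGroup E] [Module ℝ E]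

theorem refl_alt {α β : E} {f g : Module.Dual ℝ E} {r : ℝ}
    (hα : f α = 2) (hβ : g β = 2) (hαβ : f β = -(2 * r)) (hβα : g α = -(2 * r))
    (n : ℕ) (v : E) :
    (altP (Module.reflection hα) (Module.reflection hβ) (n + 1)) v =
      v - linChain (sinSeq r) (n + 1) 1 (f v) (g v) • α
        - linChain (sinSeq r) n 1 (g v) (f v) • β := by
  induction n generalizing α β f g with
  | zero =>
    simp [altP, linChain, sinSeq, Module.reflection_apply]
  | succ n ih =>
    rw [altP_succ, LinearEquiv.mul_apply, ih hβ hα hβα hαβ, Module.reflection_apply]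
    rw [linChain_two n (f v) (g v)]
    simp only [map_sub, map_smul, hα, hαβ, smul_eq_mul]
    module

theorem refl_braid {α β : E} {f g : Module.Dual ℝ E} {m : ℕ}
    (hα : f α = 2) (hβ : g β = 2) (hm : m ≠ 1) (hαβ : f β = -(2 * Real.cos (Real.pi / m)))
    (hβα : g α = -(2 * Real.cos (Real.pi / m))) :
    altP (Module.reflection hα) (Module.reflection hβ) m =
    altP (Module.reflection hβ) (Module.reflection hα) m := by
  rcases m with _ | n
  · rfl
  have hz : sinSeq (Real.cos (Real.pi / (n + 1 : ℕ))) (1 + n) = 0 := by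
    rw [add_comm 1 n]; exact sinSeq_self hm
  ext v
  rw [refl_alt hα hβ hαβ hβα, refl_alt hβ hα hβα hαβ, linChain_succ_sub, linChain_succ_sub, hz]
  simp only [zero_mul, add_zero]
  abel

end Lin

section Cox
variable {B W : Type*} [Group W] {M : CoxeterMatrix B} (cs : CoxeterSystem M W)

/-- coroots of the geometric representation -/
noncomputable def geoCoroot (M : CoxeterMatrix B) (s : B) : Module.Dual ℝ (B →₀ ℝ) :=
  Finsupp.linearCombination ℝ (fun t => -(2 * Real.cos (Real.pi / M s t)))

theorem geoCoroot_single (s t : B) :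
    geoCoroot M s (Finsupp.single t 1) = -(2 * Real.cos (Real.pi / M s t)) := by
  simp [geoCoroot]

theorem geoCoroot_self (M : CoxeterMatrix B) (s : B) :
    geoCoroot M s (Finsupp.single s 1) = 2 := by
  simp [geoCoroot]

/-- reflections of the geometric representation -/
noncomputable def geoRefl (M : CoxeterMatrix B) (s : B) : (B →₀ ℝ) ≃ₗ[ℝ] (B →₀ ℝ) :=
  Module.reflection (geoCoroot_self M s)

theorem geoRefl_mul_self (s : B) : geoRefl M s * geoRefl M s = 1 := by
  ext1 v
  exact Module.involutive_reflection (geoCoroot_self M s) v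

theorem geoRefl_liftable : M.IsLiftable (geoRefl M) := by
  intro s t
  by_cases hst : s = t
  · subst hst
    rw [geoRefl_mul_self, one_pow]
  · rw [← altP_mul_inv _ _ (geoRefl_mul_self s) (geoRefl_mul_self t)]
    rw [mul_inv_eq_one]
    refine refl_braid _ _ (M.off_diagonal s t hst) (geoCoroot_single s t) ?_
    rw [geoCoroot_single, M.symmetric t s]

theorem simple_mul_pow_ne_one {s t : B} (hst : s ≠ t) {q : ℕ} (hq : 0 < q)
    (hqm : q < M s t ∨ M s t = 0) : (cs.simple s * cs.simple t) ^ q ≠ 1 := by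
  intro h
  have h2 := congrArg (cs.lift ⟨geoRefl M, geoRefl_liftable⟩) h
  rw [map_pow, map_mul, map_one, cs.lift_apply_simple, cs.lift_apply_simple,
    ← altP_mul_inv _ _ (geoRefl_mul_self s) (geoRefl_mul_self t), mul_inv_eq_one] at h2
  obtain ⟨n, rfl⟩ : ∃ n, q = n + 1 := ⟨q - 1, by omega⟩
  have hpos := sinSeq_pos (M.off_diagonal s t hst) hq hqm
  have hts : geoCoroot M t (Finsupp.single s 1) = -(2 * Real.cos (Real.pi / M s t)) := by
    rw [geoCoroot_single, M.symmetric t s]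
  have key : ∀ v : B →₀ ℝ,
      (if Even n then geoCoroot M s v else geoCoroot M t v) = 0 := by
    intro v
    have h3 := congrArg (fun φ : (B →₀ ℝ) ≃ₗ[ℝ] (B →₀ ℝ) => φ v s) h2
    simp only [geoRefl] at h3
    rw [refl_alt _ _ (geoCoroot_single s t) hts, refl_alt _ _ hts (geoCoroot_single s t)] at h3
    rw [linChain_succ_sub _ n 1 (geoCoroot M s v)] at h3
    simp [Finsupp.single_eq_of_ne hst] at h3
    rw [add_comm 1 n] at h3
    split_ifs at h3 ⊢ <;> exact (mul_eq_zero.mp h3).resolve_left hpos.ne'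
  by_cases he : Even n
  · have := key (Finsupp.single s 1)
    rw [if_pos he, geoCoroot_self] at this
    norm_num at this
  · have := key (Finsupp.single t 1)
    rw [if_neg he, geoCoroot_self] at this
    norm_num at this

/-! ### The exchange property -/

open Classical in
/-- signed action on (reflection, sign) pairs -/
noncomputable def signAct (s : B) : Function.End (W × ZMod 2) :=
  fun p => (cs.simple s * p.1 * (cs.simple s)⁻¹, p.2 + if p.1 = cs.simple s then 1 else 0)

open Classical in
theorem signAct_word (ω : List B) (t : W) (e : ZMod 2) :
    ((ω.map (signAct cs)).prod : Function.End (W × ZMod 2)) (t, e) =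
      (cs.wordProd ω * t * (cs.wordProd ω)⁻¹, e + ((cs.rightInvSeq ω).count t : ℕ)) := by
  induction ω with
  | nil => simp; rfl
  | cons i ω ih =>
    rw [List.map_cons, List.prod_cons]
    change signAct cs i (((ω.map (signAct cs)).prod : Function.End (W × ZMod 2)) (t, e)) = _
    rw [ih]
    simp only [signAct, cs.wordProd_cons, CoxeterSystem.rightInvSeq, List.count_cons]
    refine Prod.ext ?_ ?_
    · simp only; group
    · simp only
      have : (cs.wordProd ω * t * (cs.wordProd ω)⁻¹ = cs.simple i) ↔
          ((cs.wordProd ω)⁻¹ * cs.simple i * cs.wordProd ω == t) = true := by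
        rw [beq_iff_eq, mul_inv_eq_iff_eq_mul, mul_assoc, inv_mul_eq_iff_eq_mul, eq_comm]
      by_cases h : cs.wordProd ω * t * (cs.wordProd ω)⁻¹ = cs.simple i
      · rw [if_pos h, if_pos (this.mp h)]; push_cast; ring
      · rw [if_neg h, if_neg (fun h' => h (this.mpr h'))]; push_cast; ring

theorem alternatingWord_two_mul (i j : B) (m : ℕ) :
    CoxeterSystem.alternatingWord i j (2 * (m + 1)) =
      i :: j :: CoxeterSystem.alternatingWord i j (2 * m) := by
  rw [show 2 * (m + 1) = 2 * m + 1 + 1 by ring, CoxeterSystem.alternatingWord_succ',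
    CoxeterSystem.alternatingWord_succ']
  simp [Nat.even_add_one]

theorem alternatingWord_two_mul' (i j : B) (m : ℕ) :
    CoxeterSystem.alternatingWord i j (2 * (m + 1)) =
      CoxeterSystem.alternatingWord i j (2 * m) ++ [i, j] := by
  rw [show 2 * (m + 1) = 2 * m + 1 + 1 by ring, CoxeterSystem.alternatingWord_succ,
    CoxeterSystem.alternatingWord_succ]
  simp

theorem alternatingWord_reverse (i j : B) (m : ℕ) :
    (CoxeterSystem.alternatingWord i j (2 * m)).reverse =
      CoxeterSystem.alternatingWord j i (2 * m) := by
  induction m with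
  | zero => rfl
  | succ m ih => rw [alternatingWord_two_mul', alternatingWord_two_mul]; simp [ih]

theorem alternatingWord_map_prod {G : Type*} [Monoid G] (f : B → G) (i j : B) (m : ℕ) :
    ((CoxeterSystem.alternatingWord i j (2 * m)).map f).prod = (f i * f j) ^ m := by
  induction m with
  | zero => simp [CoxeterSystem.alternatingWord]
  | succ m ih => rw [alternatingWord_two_mul, pow_succ', ← ih]; simp [mul_assoc]

theorem wordProd_alternating_add (i j : B) (k : ℕ) :
    cs.wordProd (CoxeterSystem.alternatingWord i j (2 * M i j + k)) =
      cs.wordProd (CoxeterSystem.alternatingWord i j k) := by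
  rw [cs.prod_alternatingWord_eq_mul_pow, cs.prod_alternatingWord_eq_mul_pow]
  have h1 : (2 * M i j + k) / 2 = M i j + k / 2 := by omega
  have h2 : Even (2 * M i j + k) ↔ Even k := by simp [Nat.even_add]
  rw [h1, pow_add, cs.simple_mul_simple_pow, one_mul]
  simp only [h2]

open Classical in
theorem count_ris_alternating (i j : B) (t : W) :
    Even ((cs.rightInvSeq (CoxeterSystem.alternatingWord i j (2 * M i j))).count t) := by
  rw [← alternatingWord_reverse, cs.rightInvSeq_reverse, List.count_reverse]
  set L := cs.leftInvSeq (CoxeterSystem.alternatingWord j i (2 * M i j)) with hL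
  have hlen : L.length = 2 * M i j := by simp [hL]
  have : L.drop (M i j) = L.take (M i j) := by
    apply List.ext_getElem
    · simp [hlen]; omega
    · intro k h1 h2
      simp only [List.length_take, hlen] at h2
      rw [List.getElem_drop, List.getElem_take]
      simp only [hL]
      rw [cs.getElem_leftInvSeq_alternatingWord j i _ _ (by omega),
        cs.getElem_leftInvSeq_alternatingWord j i _ _ (by omega)]
      rw [show 2 * (M i j + k) + 1 = 2 * M i j + (2 * k + 1) by ring, wordProd_alternating_add]
  rw [← List.take_append_drop (M i j) L, this, List.count_append]
  exact ⟨_, rfl⟩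

theorem signAct_liftable : M.IsLiftable (signAct cs) := by
  intro i j
  funext ⟨t, e⟩
  rw [← alternatingWord_map_prod, signAct_word]
  have h1 : cs.wordProd (CoxeterSystem.alternatingWord i j (2 * M i j)) = 1 := by
    have := wordProd_alternating_add cs i j 0
    simpa [CoxeterSystem.alternatingWord] using this
  have h2 := (ZMod.natCast_eq_zero_iff_even).mpr (count_ris_alternating cs i j t)
  rw [h1, h2]
  simp
  rfl

open Classical in
theorem count_lis_parity {ω ω' : List B} (h : cs.wordProd ω = cs.wordProd ω') (t : W) :
    (((cs.leftInvSeq ω).count t : ℕ) : ZMod 2) = ((cs.leftInvSeq ω').count t : ℕ) := by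
  have key : ∀ ω : List B, cs.lift ⟨signAct cs, signAct_liftable cs⟩ (cs.wordProd ω.reverse) =
      (ω.reverse.map (signAct cs)).prod := by
    intro ω
    rw [CoxeterSystem.wordProd, map_list_prod, List.map_map]
    congr 2
    funext i
    exact cs.lift_apply_simple _ i
  have h' : cs.wordProd ω.reverse = cs.wordProd ω'.reverse := by simp [h]
  have h2 : ((ω.reverse.map (signAct cs)).prod : Function.End (W × ZMod 2)) =
      (ω'.reverse.map (signAct cs)).prod := by rw [← key, ← key, h']
  have h3 := congrArg (fun φ : Function.End (W × ZMod 2) => (φ (t, 0)).2) h2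
  simp only [signAct_word, cs.rightInvSeq_reverse, List.count_reverse, zero_add] at h3
  exact h3

theorem mem_lis_of_leftDescent {ω : List B} {s : B}
    (h : cs.IsLeftDescent (cs.wordProd ω) s) : cs.simple s ∈ cs.leftInvSeq ω := by
  classical
  obtain ⟨ω', hr, hw⟩ := cs.exists_isReduced (cs.simple s * cs.wordProd ω)
  have hp : cs.wordProd (s :: ω') = cs.wordProd ω := by
    rw [cs.wordProd_cons, ← hw, cs.simple_mul_simple_cancel_left]
  have hred : cs.IsReduced (s :: ω') := by
    have h1 := (cs.isLeftDescent_iff).mp h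
    unfold CoxeterSystem.IsReduced at hr ⊢
    rw [hp, ← h1, hw, hr, List.length_cons]
  have hnd := hred.nodup_leftInvSeq
  have hc : (cs.leftInvSeq (s :: ω')).count (cs.simple s) = 1 :=
    List.count_eq_one_of_mem hnd (by simp [CoxeterSystem.leftInvSeq])
  have := count_lis_parity cs hp (cs.simple s)
  rw [hc] at this
  by_contra hn
  rw [List.count_eq_zero_of_not_mem hn] at this
  simp at this

/-! ### The theorem of Matsumoto -/

/-- alternating word starting with the first letter -/
def altL : B → B → ℕ → List B
  | _, _, 0 => []
  | s, t, k + 1 => s :: altL t s k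

theorem altL_length (s t : B) (k : ℕ) : (altL s t k).length = k := by
  induction k generalizing s t with
  | zero => rfl
  | succ k ih => simp [altL, ih]

theorem altL_map_prod {G : Type*} [Monoid G] (f : B → G) (s t : B) (k : ℕ) :
    ((altL s t k).map f).prod = altP (f s) (f t) k := by
  induction k generalizing s t with
  | zero => simp [altL, altP]
  | succ k ih => simp [altL, altP, ih]

theorem wordProd_altL_braid (s t : B) :
    cs.wordProd (altL s t (M s t)) = cs.wordProd (altL t s (M s t)) := by
  rw [CoxeterSystem.wordProd, CoxeterSystem.wordProd, altL_map_prod, altL_map_prod,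
    ← mul_inv_eq_one, altP_mul_inv _ _ (cs.simple_mul_simple_self s) (cs.simple_mul_simple_self t),
    cs.simple_mul_simple_pow]

theorem mem_lis_altL {s t : B} {k : ℕ} {x : W} (hx : x ∈ cs.leftInvSeq (altL s t k)) :
    ∃ j < k, x = (cs.simple s * cs.simple t) ^ j * cs.simple s := by
  induction k generalizing s t x with
  | zero => simp [altL] at hx
  | succ k ih =>
    simp only [altL, CoxeterSystem.leftInvSeq, List.mem_cons, List.mem_map] at hx
    rcases hx with rfl | ⟨y, hy, rfl⟩
    · exact ⟨0, by omega, by simp⟩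
    · obtain ⟨j, hj, rfl⟩ := ih hy
      refine ⟨j + 1, by omega, ?_⟩
      rw [MulAut.conj_apply, cs.inv_simple]
      have e : ∀ (a b : W) (k : ℕ), a * ((b * a) ^ k * b) = (a * b) ^ (k + 1) := by
        intro a b k
        induction k with
        | zero => simp
        | succ k ih => rw [pow_succ, pow_succ (a * b), ← ih]; simp only [mul_assoc]
      rw [e]

/-- Two left descents give an alternating beginning. -/
theorem exists_alt_start {w : W} (k : ℕ) {s t : B} (hst : s ≠ t)
    (hs : cs.IsLeftDescent w s) (ht : cs.IsLeftDescent w t) (hk : k ≤ M s t ∨ M s t = 0) :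
    ∃ ρ : List B, cs.IsReduced (altL s t k ++ ρ) ∧ cs.wordProd (altL s t k ++ ρ) = w := by
  induction k generalizing s t with
  | zero =>
    obtain ⟨ω, h1, h2⟩ := cs.exists_isReduced w
    exact ⟨ω, by simpa [altL] using h1, by simpa [altL] using h2.symm⟩
  | succ k ih =>
    obtain ⟨ρ, hr, hw⟩ := ih hst.symm ht hs (by rw [M.symmetric t s]; omega)
    have hmem := mem_lis_of_leftDescent cs (ω := altL t s k ++ ρ) (s := s) (by rw [hw]; exact hs)
    obtain ⟨j, hj, hje⟩ := List.mem_iff_getElem.mp hmem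
    have hj' : j < (altL t s k ++ ρ).length := by simpa using hj
    have hkj : k ≤ j := by
      by_contra! hlt
      have hmem2 : cs.simple s ∈ cs.leftInvSeq (altL t s k) := by
        have e1 : altL t s k = (altL t s k ++ ρ).take k := by
          rw [List.take_left' (altL_length t s k)]
        rw [e1, cs.leftInvSeq_take, ← hje]
        rw [List.mem_take_iff_getElem]
        exact ⟨j, by omega, rfl⟩
      obtain ⟨i, hi, he⟩ := mem_lis_altL cs hmem2
      refine simple_mul_pow_ne_one cs hst.symm (q := i + 1) (by omega)
        (by rw [M.symmetric t s]; omega) ?_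
      rw [pow_succ, ← mul_assoc, ← he, cs.simple_mul_simple_self]
    have herase := cs.getD_leftInvSeq_mul_wordProd (altL t s k ++ ρ) j
    rw [List.getD_eq_getElem _ _ hj, hje, hw] at herase
    rw [List.eraseIdx_append_of_length_le (by rw [altL_length]; exact hkj), altL_length] at herase
    refine ⟨ρ.eraseIdx (j - k), ?_⟩
    have hprod : cs.wordProd (altL s t (k + 1) ++ ρ.eraseIdx (j - k)) = w := by
      rw [altL, List.cons_append, cs.wordProd_cons, ← herase, cs.simple_mul_simple_cancel_left]
    refine ⟨?_, hprod⟩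
    unfold CoxeterSystem.IsReduced at hr ⊢
    rw [hprod, ← hw, hr]
    have hl : j < k + ρ.length := by simpa [altL_length] using hj'
    simp only [List.length_append, altL_length, List.length_eraseIdx]
    rw [if_pos (by omega)]
    omega

theorem leftDescent_of_reduced_cons {s : B} {l : List B} (h : cs.IsReduced (s :: l)) :
    cs.IsLeftDescent (cs.wordProd (s :: l)) s := by
  unfold CoxeterSystem.IsLeftDescent
  rw [h.eq, cs.wordProd_cons, cs.simple_mul_simple_cancel_left]
  have := cs.length_wordProd_le l
  simp only [List.length_cons]
  omega

theorem matsumoto {X : Type*} (F : List B → X)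
    (hcons : ∀ s l l', F l = F l' → F (s :: l) = F (s :: l'))
    (hbraid : ∀ s t l, s ≠ t → M s t ≠ 0 → F (altL s t (M s t) ++ l) = F (altL t s (M s t) ++ l))
    {l l' : List B} (hl : cs.IsReduced l) (hl' : cs.IsReduced l')
    (h : cs.wordProd l = cs.wordProd l') : F l = F l' := by
  induction hn : l.length generalizing l l' with
  | zero =>
    have h1 : l'.length = 0 := by rw [← hl'.eq, ← h, hl.eq, hn]
    rw [List.length_eq_zero_iff.mp hn, List.length_eq_zero_iff.mp h1]
  | succ n ih =>
    have hn' : l'.length = n + 1 := by rw [← hl'.eq, ← h, hl.eq, hn]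
    have same : ∀ s l1 l2, cs.IsReduced (s :: l1) → cs.IsReduced (s :: l2) →
        cs.wordProd (s :: l1) = cs.wordProd (s :: l2) → (s :: l1).length = n + 1 →
        F (s :: l1) = F (s :: l2) := by
      intro s l1 l2 h1 h2 h3 h4
      apply hcons
      refine ih (by simpa using h1.drop 1) (by simpa using h2.drop 1) ?_ (by simpa using h4)
      rw [cs.wordProd_cons, cs.wordProd_cons] at h3
      exact mul_left_cancel h3
    rcases l with _ | ⟨s, l1⟩
    · simp at hn
    rcases l' with _ | ⟨t, l2⟩
    · simp at hn'
    by_cases hst : s = t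
    · subst hst
      exact same s l1 l2 hl hl' h hn
    have hs := leftDescent_of_reduced_cons cs hl
    have ht : cs.IsLeftDescent (cs.wordProd (s :: l1)) t := by
      rw [h]; exact leftDescent_of_reduced_cons cs hl'
    by_cases hM : M s t = 0
    · obtain ⟨ρ, h1, h2⟩ := exists_alt_start cs (n + 2) hst hs ht (Or.inr hM)
      have h3 := h1.eq
      rw [h2, hl.eq, hn, List.length_append, altL_length] at h3
      omega
    · obtain ⟨ρ, h1, h2⟩ := exists_alt_start cs (M s t) hst hs ht (Or.inl le_rfl)
      have hb := hbraid s t ρ hst hM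
      have hw2 : cs.wordProd (altL t s (M s t) ++ ρ) = cs.wordProd (s :: l1) := by
        rw [← h2, cs.wordProd_append, cs.wordProd_append, wordProd_altL_braid]
      have hr2 : cs.IsReduced (altL t s (M s t) ++ ρ) := by
        unfold CoxeterSystem.IsReduced at h1 ⊢
        rw [hw2, ← h2, h1]
        simp [altL_length]
      obtain ⟨m, hm⟩ : ∃ m, M s t = m + 1 := ⟨M s t - 1, by omega⟩
      rw [hm] at hb h1 h2 hw2 hr2
      simp only [altL, List.cons_append] at hb h1 h2 hw2 hr2
      rw [same s _ _ hl h1 h2.symm hn, hb, same t _ _ hr2 hl' (hw2.trans h) ?_]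
      rw [← hr2.eq, hw2, hl.eq, hn]

end Cox

/-! ### Pitman transforms along words -/

section Final
set_option linter.unusedSectionVars false
variable {V : Type*} [NormedAddCommGroup V] [NormedSpace ℝ V] [FiniteDimensional ℝ V]
variable {B : Type*} (α : B → V) (αv : B → Module.Dual ℝ V)

theorem pitmanWord_cons (s : B) (l : List B) (π : ℝ → V) :
    pitmanWord α αv (s :: l) π = pitman (α s) (αv s) (pitmanWord α αv l π) := rfl

theorem pitmanWord_nil (π : ℝ → V) : pitmanWord α αv [] π = π := rfl

theorem pitmanWord_append (l l' : List B) (π : ℝ → V) :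
    pitmanWord α αv (l ++ l') π = pitmanWord α αv l (pitmanWord α αv l' π) := by
  induction l with
  | nil => rfl
  | cons s l ih => rw [List.cons_append, pitmanWord_cons, pitmanWord_cons, ih]

theorem Good.pitmanWord {π : ℝ → V} (h : Good π) (l : List B) : Good (pitmanWord α αv l π) := by
  induction l with
  | nil => exact h
  | cons s l ih => exact ih.pitman _ _

theorem pitmanWord_altL (s t : B) (k : ℕ) (π : ℝ → V) :
    pitmanWord α αv (altL s t k) π =
      (altP (pitmanEnd (α s) (αv s)) (pitmanEnd (α t) (αv t)) k) π := by
  induction k generalizing s t with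
  | zero => rfl
  | succ k ih =>
    rw [altL, pitmanWord_cons, ih]
    rfl

theorem pitmanWord_inv {W : Type*} [Group W] {M : CoxeterMatrix B} (cs : CoxeterSystem M W)
    (hpair : ∀ s, αv s (α s) = 2)
    (hM : ∀ s s' : B, s ≠ s' →
      (M s s' = 2 ∧ αv s (α s') = 0 ∧ αv s' (α s) = 0) ∨
      (αv s (α s') < 0 ∧ αv s' (α s) < 0 ∧
        αv s (α s') * αv s' (α s) = 4 * Real.cos (Real.pi / (M s s' : ℝ)) ^ 2))
    {l l' : List B} (hl : cs.IsReduced l) (hl' : cs.IsReduced l')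
    (h : cs.wordProd l = cs.wordProd l') {π : ℝ → V} (hπ : Good π) :
    pitmanWord α αv l π = pitmanWord α αv l' π := by
  have := matsumoto cs (fun l => fun π : {π : ℝ → V // Good π} => pitmanWord α αv l π.1)
    (fun s l l' h => by
      funext π
      have h1 := congrFun h π
      simp only [pitmanWord_cons] at h1 ⊢
      rw [h1])
    (fun s t l hst h0 => by
      funext π
      have h1 := M.off_diagonal s t hst
      simp only [pitmanWord_append, pitmanWord_altL]
      exact pitman_braid (by omega) (hpair s) (hpair t) (hM s t hst)
        (π.2.pitmanWord α αv l)) hl hl' h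
  exact congrFun this ⟨π, hπ⟩

theorem pitman_nonneg {a : V} {f : Module.Dual ℝ V} (h2 : f a = 2) {π : ℝ → V} (hπ : Good π)
    {t : ℝ} (ht : 0 ≤ t) : 0 ≤ f (pitman a f π t) := by
  rw [pitman_apply, map_sub, map_smul, h2, smul_eq_mul]
  have h1 := runInf_le (hπ.comp f) ht le_rfl
  have h0 := runInf_le (hπ.comp f) le_rfl ht
  simp only [hπ.2, map_zero] at h0
  linarith

theorem pitman_eq_self {a : V} {f : Module.Dual ℝ V} {π : ℝ → V} (hπ : Good π)
    (h : ∀ t, 0 ≤ t → 0 ≤ f (π t)) : pitman a f π = π := by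
  funext t
  rw [pitman_apply]
  have : runInf (fun u => f (π u)) t = 0 := by
    rcases lt_or_ge t 0 with ht | ht
    · exact runInf_neg _ ht
    · apply le_antisymm
      · have h0 := runInf_le (hπ.comp f) le_rfl ht
        simpa only [hπ.2, map_zero] using h0
      · exact le_runInf (hπ.comp f) ht fun u hu _ => h u hu
  rw [this, zero_smul, sub_zero]

theorem pitmanWord_eq_self {π : ℝ → V} (hπ : Good π)
    (h : ∀ s t, 0 ≤ t → 0 ≤ αv s (π t)) (l : List B) : pitmanWord α αv l π = π := by
  induction l with
  | nil => rfl
  | cons s l ih => rw [pitmanWord_cons, ih, pitman_eq_self hπ (h s)]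

theorem pitmanWord_congr (T : ℝ) {π π' : ℝ → V} (h : ∀ t ≤ T, π t = π' t) (l : List B) :
    ∀ t ≤ T, pitmanWord α αv l π t = pitmanWord α αv l π' t := by
  induction l with
  | nil => exact h
  | cons s l ih =>
    intro t ht
    rw [pitmanWord_cons, pitmanWord_cons, pitman_apply, pitman_apply, ih t ht]
    rw [runInf_congr fun u _ hu => by rw [ih u (hu.trans ht)]]

end Final

/-- Corollary 2.8 of Biane–Bougerol–O'Connell.  If `W` is finite with longest element
`w₀`, then (a) `P_{w₀} π` takes values in the closed Weyl chamber
`C̄ = {v : α_s∨(v) ≥ 0 for all s}`; (b) `P_{w₀}` is an idempotent;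
(c) `P_w ∘ P_{w₀} = P_{w₀} ∘ P_w = P_{w₀}` for every `w ∈ W`.  Here `P_{w₀}` and `P_w`
are computed along arbitrary reduced words `l₀` and `l`. -/
theorem pitmanWord_longest_element
    {V : Type*} [NormedAddCommGroup V] [NormedSpace ℝ V] [FiniteDimensional ℝ V]
    (T : ℝ) (hT : 0 < T)
    {B : Type*} [Fintype B] {W : Type*} [Group W] [Finite W]
    (M : CoxeterMatrix B) (cs : CoxeterSystem M W)
    (α : B → V) (αv : B → Module.Dual ℝ V)
    (hpair : ∀ s, αv s (α s) = 2)
    (ρ : W →* (V ≃ₗ[ℝ] V)) (hρinj : Function.Injective ρ)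
    (hρs : ∀ s v, ρ (cs.simple s) v = v - αv s v • α s)
    (hM : ∀ s s' : B, s ≠ s' →
      (M s s' = 2 ∧ αv s (α s') = 0 ∧ αv s' (α s) = 0) ∨
      (αv s (α s') < 0 ∧ αv s' (α s) < 0 ∧
        αv s (α s') * αv s' (α s) = 4 * Real.cos (Real.pi / (M s s' : ℝ)) ^ 2))
    (w₀ : W) (hw₀ : ∀ w : W, cs.length w ≤ cs.length w₀)
    (l₀ : List B) (hl₀ : cs.wordProd l₀ = w₀) (hl₀red : cs.IsReduced l₀)
    (w : W) (l : List B) (hl : cs.wordProd l = w) (hlred : cs.IsReduced l)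
    (π : ℝ → V) (hcont : ContinuousOn π (Set.Icc 0 T)) (h0 : π 0 = 0) :
    (∀ t ∈ Set.Icc 0 T, ∀ s : B, 0 ≤ αv s (pitmanWord α αv l₀ π t)) ∧
    (∀ t ∈ Set.Icc 0 T,
      pitmanWord α αv l₀ (pitmanWord α αv l₀ π) t = pitmanWord α αv l₀ π t) ∧
    (∀ t ∈ Set.Icc 0 T,
      pitmanWord α αv l (pitmanWord α αv l₀ π) t = pitmanWord α αv l₀ π t) ∧
    (∀ t ∈ Set.Icc 0 T,
      pitmanWord α αv l₀ (pitmanWord α αv l π) t = pitmanWord α αv l₀ π t) := by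
  have hinv : ∀ {l' : List B}, cs.IsReduced l' → cs.wordProd l' = w₀ → ∀ {σ : ℝ → V}, Good σ →
      pitmanWord α αv l₀ σ = pitmanWord α αv l' σ := fun hr hw _ hσ =>
    pitmanWord_inv α αv cs hpair hM hl₀red hr (hl₀.trans hw.symm) hσ
  have hA : ∀ σ : ℝ → V, Good σ → ∀ s t, 0 ≤ t → 0 ≤ αv s (pitmanWord α αv l₀ σ t) := by
    intro σ hσ s t ht
    obtain ⟨ω, hr, hw⟩ := cs.exists_isReduced (cs.simple s * w₀)
    have hp : cs.wordProd (s :: ω) = w₀ := by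
      rw [cs.wordProd_cons, ← hw, cs.simple_mul_simple_cancel_left]
    have hred : cs.IsReduced (s :: ω) := by
      have h1 := cs.length_simple_mul w₀ s
      have h2 := hw₀ (cs.simple s * w₀)
      unfold CoxeterSystem.IsReduced at hr ⊢
      rw [hp, List.length_cons, ← hr, ← hw]
      omega
    rw [hinv hred hp hσ, pitmanWord_cons]
    exact pitman_nonneg (hpair s) (hσ.pitmanWord α αv ω) ht
  have hC1 : ∀ (l' : List B) (σ : ℝ → V), Good σ →
      pitmanWord α αv l' (pitmanWord α αv l₀ σ) = pitmanWord α αv l₀ σ := fun l' σ hσ =>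
    pitmanWord_eq_self α αv (hσ.pitmanWord α αv l₀) (hA σ hσ) l'
  have hC2s : ∀ (s : B) (σ : ℝ → V), Good σ →
      pitmanWord α αv l₀ (pitman (α s) (αv s) σ) = pitmanWord α αv l₀ σ := by
    intro s σ hσ
    obtain ⟨ω, hr, hw⟩ := cs.exists_isReduced (w₀ * cs.simple s)
    have hp : cs.wordProd (ω ++ [s]) = w₀ := by
      rw [cs.wordProd_append, cs.wordProd_singleton, ← hw, cs.simple_mul_simple_cancel_right]
    have hred : cs.IsReduced (ω ++ [s]) := by
      have h1 := cs.length_mul_simple w₀ s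
      have h2 := hw₀ (w₀ * cs.simple s)
      unfold CoxeterSystem.IsReduced at hr ⊢
      rw [hp, List.length_append, List.length_singleton, ← hr, ← hw]
      omega
    rw [hinv hred hp hσ, hinv hred hp (hσ.pitman _ _), pitmanWord_append, pitmanWord_append,
      pitmanWord_cons, pitmanWord_cons, pitmanWord_nil, pitmanWord_nil,
      pitman_eq_self (hσ.pitman _ _) fun t ht => pitman_nonneg (hpair s) hσ ht]
  have hC2 : ∀ (l' : List B) (σ : ℝ → V), Good σ →
      pitmanWord α αv l₀ (pitmanWord α αv l' σ) = pitmanWord α αv l₀ σ := by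
    intro l' σ hσ
    induction l' with
    | nil => rfl
    | cons s l' ih => rw [pitmanWord_cons, hC2s s _ (hσ.pitmanWord α αv l'), ih]
  obtain ⟨σ, hσ, hπσ⟩ : ∃ σ : ℝ → V, Good σ ∧ ∀ t ≤ T, π t = σ t := by
    refine ⟨fun t => π (min t T), ⟨?_, ?_⟩, fun t ht => by simp [min_eq_left ht]⟩
    · apply hcont.comp (by fun_prop)
      intro t ht
      exact ⟨le_min ht hT.le, min_le_right _ _⟩
    · simp [min_eq_left hT.le, h0]
  have e0 := pitmanWord_congr α αv T hπσ l₀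
  have e1 := pitmanWord_congr α αv T hπσ l
  refine ⟨fun t ht s => ?_, fun t ht => ?_, fun t ht => ?_, fun t ht => ?_⟩
  · rw [e0 t ht.2]
    exact hA σ hσ s t ht.1
  · rw [pitmanWord_congr α αv T e0 l₀ t ht.2, e0 t ht.2, hC1 l₀ σ hσ]
  · rw [pitmanWord_congr α αv T e0 l t ht.2, e0 t ht.2, hC1 l σ hσ]
  · rw [pitmanWord_congr α αv T e1 l₀ t ht.2, e0 t ht.2, hC2 l σ hσ]
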